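/- Let n ≥ 2 and q ≥ 1 be integers, γ ∈ (0,1], and ξ = (1−γ)/γ. For t = 0, 1, …, n+q−3 define the q×q real matrices A(t) = I_q − (1−γ)·Σ_{j=1}^{q} χ(j−1 ≤ t ≤ n+j−3)·e_j(e_j − e_{j−1})ᵀ (with e_0 = 0) and B(t) = I_q + ξ·Σ_{i=1}^{q−1} χ(i ≤ t ≤ i+n−2)·e_{i+1}e_iᵀ. Then A(n+q−3)·A(n+q−4)···A(0) = γ^{n−q}·diag(1, γ, γ², …, γ^{q−1})·(B(n+q−3)·B(n+q−4)···B(0))·diag(γ^{q−1}, …, γ², γ, 1), where γ^{n−q} is the integer power of γ (with negative exponent allowed since γ > 0). -/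

import Mathlib

/-- The standard basis vectors of `ℝ^q`, numbered `1, …, q` (with `e 0 = 0` and
`e j = 0` for `j > q` by convention). -/
noncomputable def eVec (q : ℕ) (j : ℕ) : Fin q → ℝ :=
  if h : 1 ≤ j ∧ j ≤ q then Pi.single (⟨j - 1, by omega⟩ : Fin q) 1 else 0

/-- The matrix `A(t) = I_q - (1-γ) Σ_{j=1}^{q} χ(j-1 ≤ t ≤ n+j-3) e_j (e_j - e_{j-1})ᵀ`. -/
noncomputable def Amat (n q : ℕ) (γ : ℝ) (t : ℕ) : Matrix (Fin q) (Fin q) ℝ :=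
  1 - (1 - γ) • ∑ j ∈ Finset.Icc 1 q,
    (if j - 1 ≤ t ∧ t ≤ n + j - 3 then (1 : ℝ) else 0) •
      Matrix.vecMulVec (eVec q j) (eVec q j - eVec q (j - 1))

/-- The matrix `B(t) = I_q + ξ Σ_{i=1}^{q-1} χ(i ≤ t ≤ i+n-2) e_{i+1} e_iᵀ`. -/
noncomputable def Bmat (n q : ℕ) (ξ : ℝ) (t : ℕ) : Matrix (Fin q) (Fin q) ℝ :=
  1 + ξ • ∑ i ∈ Finset.Icc 1 (q - 1),
    (if i ≤ t ∧ t ≤ i + n - 2 then (1 : ℝ) else 0) •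
      Matrix.vecMulVec (eVec q (i + 1)) (eVec q i)

/-- The ordered (time-decreasing) product `A(T-1) ⬝ A(T-2) ⬝ ⋯ ⬝ A(0)`. -/
noncomputable def prodRev {q : ℕ} (A : ℕ → Matrix (Fin q) (Fin q) ℝ) :
    ℕ → Matrix (Fin q) (Fin q) ℝ
  | 0 => 1
  | t + 1 => A t * prodRev A t

theorem eVec_apply (q j : ℕ) (i : Fin q) : eVec q j i = if j = (i : ℕ) + 1 then 1 else 0 := by
  have hi := i.isLt
  unfold eVec
  split_ifs with h hj hj
  · subst hj
    simp
  · exact Pi.single_eq_of_ne (fun h' => hj (by simp [h']; omega)) _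
  · omega
  · rfl

theorem eVec_succ (q : ℕ) (i : Fin q) : eVec q ((i : ℕ) + 1) = Pi.single i 1 := by
  ext k
  simp [eVec_apply, Pi.single_apply, Fin.ext_iff, eq_comm]

theorem eVec_zero (q : ℕ) : eVec q 0 = 0 := by
  simp [eVec]

open Matrix in
/-- Left multiplication by `A(t)` acts on the rows as a convex combination of neighbours. -/
theorem Amat_mul_apply (n q : ℕ) (γ : ℝ) (t : ℕ) (M : Matrix (Fin q) (Fin q) ℝ) (i k : Fin q) :
    (Amat n q γ t * M) i k =
      if (i : ℕ) ≤ t ∧ t ≤ n + (i + 1) - 3 then γ * M i k + (1 - γ) * (eVec q i ᵥ* M) k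
      else M i k := by
  have hi : (i : ℕ) + 1 ∈ Finset.Icc 1 q := by simp
  have key : (Amat n q γ t * M) i k = M i k - (1 - γ) *
      ∑ j ∈ Finset.Icc 1 q, if j = (i : ℕ) + 1 then
        (if (i : ℕ) ≤ t ∧ t ≤ n + (i + 1) - 3 then M i k - (eVec q i ᵥ* M) k else 0) else 0 := by
    rw [Amat, sub_mul, one_mul, smul_mul_assoc, Finset.sum_mul, Matrix.sub_apply, Matrix.smul_apply,
      Matrix.sum_apply, smul_eq_mul]
    congr 2
    refine Finset.sum_congr rfl fun j _ => ?_
    rw [smul_mul_assoc, Matrix.smul_apply, vecMulVec_mul, vecMulVec_apply, eVec_apply, sub_vecMul]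
    by_cases hj : j = (i : ℕ) + 1
    · subst hj
      simp [eVec_succ, Matrix.row]
    · simp [hj]
  rw [key, Finset.sum_ite_eq', if_pos hi]
  split_ifs <;> ring

open Matrix in
/-- Left multiplication by `B(t)` adds `ξ` times the preceding row to every active row. -/
theorem Bmat_mul_apply (n q : ℕ) (ξ : ℝ) (t : ℕ) (M : Matrix (Fin q) (Fin q) ℝ) (i k : Fin q) :
    (Bmat n q ξ t * M) i k =
      M i k + if (i : ℕ) ≤ t ∧ t ≤ i + n - 2 then ξ * (eVec q i ᵥ* M) k else 0 := by
  have key : (Bmat n q ξ t * M) i k = M i k + ξ *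
      ∑ j ∈ Finset.Icc 1 (q - 1), if j = (i : ℕ) then
        (if (i : ℕ) ≤ t ∧ t ≤ i + n - 2 then (eVec q i ᵥ* M) k else 0) else 0 := by
    rw [Bmat, add_mul, one_mul, smul_mul_assoc, Finset.sum_mul, Matrix.add_apply, Matrix.smul_apply,
      Matrix.sum_apply, smul_eq_mul]
    congr 2
    refine Finset.sum_congr rfl fun j _ => ?_
    rw [smul_mul_assoc, Matrix.smul_apply, vecMulVec_mul, vecMulVec_apply, eVec_apply]
    by_cases hj : j = (i : ℕ)
    · subst hj
      simp
    · simp [hj]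
  rw [key, Finset.sum_ite_eq']
  by_cases h0 : (i : ℕ) = 0
  · simp [h0, eVec_zero]
  · rw [if_pos (by simp; omega)]
    split_ifs <;> ring

open Matrix in
/-- Row `i` is active at the times `i, …, i + n - 2`, so it has been active `min (t - i) (n - 1)`
times before time `t`; this determines the scaling between the two partial products. -/
theorem pow_mul_prodRev_Amat_apply (n q : ℕ) (hn : 2 ≤ n) (γ : ℝ) (hγ : γ ≠ 0) (t : ℕ)
    (i k : Fin q) :
    γ ^ (k : ℕ) * prodRev (Amat n q γ) t i k =
      γ ^ (min (t - i) (n - 1) + i) * prodRev (Bmat n q ((1 - γ) / γ)) t i k := by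
  induction t generalizing i with
  | zero =>
    by_cases h : i = k
    · simp [h, prodRev]
    · simp [prodRev, one_apply_ne h]
  | succ t ih =>
    have hrow := ih i
    rw [prodRev, prodRev, Amat_mul_apply, Bmat_mul_apply]
    by_cases hact : (i : ℕ) ≤ t ∧ t ≤ i + n - 2
    · rw [if_pos (by omega), if_pos hact]
      rw [show min (t - i) (n - 1) + i = t by omega] at hrow
      rw [show min (t + 1 - i) (n - 1) + i = t + 1 by omega]
      have hprev : γ ^ (k : ℕ) * (eVec q i ᵥ* prodRev (Amat n q γ) t) k =
          γ ^ t * (eVec q i ᵥ* prodRev (Bmat n q ((1 - γ) / γ)) t) k := by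
        rcases Nat.eq_zero_or_pos (i : ℕ) with h0 | h0
        · simp [h0, eVec_zero]
        · have h := ih ⟨i - 1, by omega⟩
          rw [show min (t - (i - 1)) (n - 1) + (i - 1) = t by omega] at h
          have he := eVec_succ q ⟨i - 1, by omega⟩
          rw [show (i : ℕ) - 1 + 1 = i by omega] at he
          simpa [he, Matrix.row] using h
      rw [pow_succ]
      field_simp
      linear_combination γ * hrow + (1 - γ) * hprev
    · rw [if_neg (by omega), if_neg hact, add_zero, hrow]
      congr 3
      omega

/-- The factorization formula
`A(n+q-3)⋯A(0) = γ^{n-q} diag(1,γ,…,γ^{q-1}) (B(n+q-3)⋯B(0)) diag(γ^{q-1},…,γ,1)`,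
with `ξ = (1-γ)/γ`. -/
theorem A_product_factorization
    (n q : ℕ) (hn : 2 ≤ n) (hq : 1 ≤ q) (γ : ℝ) (hγ : γ ∈ Set.Ioc (0 : ℝ) 1) :
    prodRev (Amat n q γ) (n + q - 2) =
      γ ^ ((n : ℤ) - (q : ℤ)) •
        (Matrix.diagonal (fun i : Fin q => γ ^ (i : ℕ)) *
          prodRev (Bmat n q ((1 - γ) / γ)) (n + q - 2) *
          Matrix.diagonal (fun i : Fin q => γ ^ (q - 1 - (i : ℕ)))) := by
  have h0 : γ ≠ 0 := hγ.1.ne'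
  ext i k
  have h := pow_mul_prodRev_Amat_apply n q hn γ h0 (n + q - 2) i k
  rw [show min (n + q - 2 - i) (n - 1) + i = n - 1 + i by omega] at h
  rw [Matrix.smul_apply, Matrix.mul_diagonal, Matrix.diagonal_mul, smul_eq_mul]
  apply mul_left_cancel₀ (pow_ne_zero (k : ℕ) h0)
  have hpow : γ ^ (n - 1 + (i : ℕ)) =
      γ ^ (k : ℕ) * γ ^ ((n : ℤ) - q) * γ ^ (i : ℕ) * γ ^ (q - 1 - (k : ℕ)) := by
    simp only [← zpow_natCast, ← zpow_add₀ h0]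
    congr 1
    omega
  rw [h, hpow]
  ring
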